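/- For α, β > -1/2, there exist constants 0 < c₁ ≤ c₂ (depending only on α, β) such that for all θ, φ ∈ (0, π), c₁ |θ-φ|(θ+φ)^{2α+1}((π-θ)+(π-φ))^{2β+1} ≤ μ_{α,β}(B(θ,|θ-φ|)) ≤ c₂ |θ-φ|(θ+φ)^{2α+1}((π-θ)+(π-φ))^{2β+1}. -/

import Mathlib

/-!
Both exponents `2α+1` and `2β+1` are positive, so the density is monotone in `sin (t/2)` and in
`cos (t/2) = sin ((π-t)/2)`, and these compare with `t` and `π-t` through
`2x/π ≤ sin x ≤ x` on `[0, π/2]`.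

Upper bound: on the ball `B(θ, |θ-φ|)`, which has length at most `2|θ-φ|`, one has
`t/2 ≤ θ+φ` and `(π-t)/2 ≤ (π-θ)+(π-φ)`.

Lower bound: the ball contains the middle third of the segment between `θ` and `φ`. It has length
`|θ-φ|/3`, and on it `t ≥ (θ+φ)/3` and `π-t ≥ ((π-θ)+(π-φ))/3`.
-/

open Real MeasureTheory

/-- The measure dμ_{α,β}(θ) = (sin(θ/2))^{2α+1}(cos(θ/2))^{2β+1} dθ on (0,π). -/
noncomputable def muJacobi (α β : ℝ) : Measure ℝ :=
  (volume.restrict (Set.Ioo 0 π)).withDensity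
    (fun θ => ENNReal.ofReal ((Real.sin (θ/2)) ^ (2*α+1) * (Real.cos (θ/2)) ^ (2*β+1)))

lemma muJacobi_Ioo (α β x y : ℝ) :
    muJacobi α β (Set.Ioo x y) = ∫⁻ t in Set.Ioo x y ∩ Set.Ioo 0 π,
      ENNReal.ofReal ((Real.sin (t/2)) ^ (2*α+1) * (Real.cos (t/2)) ^ (2*β+1)) := by
  rw [muJacobi, withDensity_apply _ measurableSet_Ioo,
    Measure.restrict_restrict measurableSet_Ioo]

lemma half_angle_bounds {t : ℝ} (ht : t ∈ Set.Ioo 0 π) :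
    t / π ≤ Real.sin (t/2) ∧ Real.sin (t/2) ≤ t/2 ∧
    (π - t) / π ≤ Real.cos (t/2) ∧ Real.cos (t/2) ≤ (π - t)/2 := by
  obtain ⟨h0, h1⟩ := ht
  have key : ∀ s : ℝ, 0 < s → s < π → s / π ≤ Real.sin (s/2) ∧ Real.sin (s/2) ≤ s/2 := by
    intro s hs hs'
    refine ⟨?_, Real.sin_le (by linarith)⟩
    have := Real.mul_le_sin (x := s/2) (by linarith) (by linarith)
    calc s / π = 2 / π * (s/2) := by ring
      _ ≤ _ := this
  have hc : Real.cos (t/2) = Real.sin ((π - t)/2) := by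
    rw [← Real.sin_pi_div_two_sub]; congr 1; ring
  rw [hc]
  obtain ⟨a, b⟩ := key t h0 h1
  obtain ⟨c, d⟩ := key (π - t) (by linarith) (by linarith)
  exact ⟨a, b, c, d⟩

lemma muJacobi_le {α β θ φ : ℝ} (hα : α > -1/2) (hβ : β > -1/2)
    (hθ : θ ∈ Set.Ioo 0 π) (hφ : φ ∈ Set.Ioo 0 π) :
    muJacobi α β (Set.Ioo (θ - |θ - φ|) (θ + |θ - φ|)) ≤
      ENNReal.ofReal (2 * |θ - φ| * (θ + φ) ^ (2*α+1) * ((π - θ) + (π - φ)) ^ (2*β+1)) := by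
  obtain ⟨hθ0, hθ1⟩ := hθ
  obtain ⟨hφ0, hφ1⟩ := hφ
  have hr : |θ - φ| ≤ θ + φ := abs_le.2 ⟨by linarith, by linarith⟩
  have hr' : |θ - φ| ≤ (π - θ) + (π - φ) := abs_le.2 ⟨by linarith, by linarith⟩
  set r := |θ - φ| with hrdef
  have hr0 : 0 ≤ r := abs_nonneg _
  set A := (θ + φ) ^ (2*α+1)
  set B := ((π - θ) + (π - φ)) ^ (2*β+1)
  have hA : 0 ≤ A := Real.rpow_nonneg (by linarith) _
  have hB : 0 ≤ B := Real.rpow_nonneg (by linarith) _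
  rw [muJacobi_Ioo]
  calc _ ≤ ∫⁻ _ in Set.Ioo (θ - r) (θ + r) ∩ Set.Ioo 0 π, ENNReal.ofReal (A * B) := by
        refine setLIntegral_mono' (measurableSet_Ioo.inter measurableSet_Ioo) ?_
        rintro t ⟨⟨h1, h2⟩, ht⟩
        obtain ⟨a, b, c, d⟩ := half_angle_bounds ht
        have hs : 0 ≤ Real.sin (t/2) := (div_nonneg ht.1.le Real.pi_pos.le).trans a
        have hc : 0 ≤ Real.cos (t/2) :=
          (div_nonneg (sub_nonneg.2 ht.2.le) Real.pi_pos.le).trans c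
        apply ENNReal.ofReal_le_ofReal
        refine mul_le_mul ?_ ?_ (Real.rpow_nonneg hc _) hA
        · exact Real.rpow_le_rpow hs (by linarith) (by linarith)
        · exact Real.rpow_le_rpow hc (by linarith) (by linarith)
    _ ≤ ∫⁻ _ in Set.Ioo (θ - r) (θ + r), ENNReal.ofReal (A * B) :=
        lintegral_mono_set Set.inter_subset_left
    _ = ENNReal.ofReal (2 * r * A * B) := by
        rw [setLIntegral_const, Real.volume_Ioo, ← ENNReal.ofReal_mul (mul_nonneg hA hB)]
        congr 1; ring

lemma le_muJacobi {α β θ φ : ℝ} (hα : α > -1/2) (hβ : β > -1/2)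
    (hθ : θ ∈ Set.Ioo 0 π) (hφ : φ ∈ Set.Ioo 0 π) :
    ENNReal.ofReal ((1/3 * (1/(3*π)) ^ (2*α+1) * (1/(3*π)) ^ (2*β+1)) * |θ - φ| *
        (θ + φ) ^ (2*α+1) * ((π - θ) + (π - φ)) ^ (2*β+1)) ≤
      muJacobi α β (Set.Ioo (θ - |θ - φ|) (θ + |θ - φ|)) := by
  obtain ⟨hθ0, hθ1⟩ := hθ
  obtain ⟨hφ0, hφ1⟩ := hφ
  have hpi := Real.pi_pos
  have hr : |θ - φ| ≤ θ + φ := abs_le.2 ⟨by linarith, by linarith⟩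
  have hr' : |θ - φ| ≤ (π - θ) + (π - φ) := abs_le.2 ⟨by linarith, by linarith⟩
  have hr1 : θ - φ ≤ |θ - φ| := le_abs_self _
  have hr2 : -(θ - φ) ≤ |θ - φ| := neg_le_abs _
  set r := |θ - φ| with hrdef
  have hr0 : 0 ≤ r := abs_nonneg _
  set A := (1/(3*π) * (θ + φ)) ^ (2*α+1) with hAdef
  set B := (1/(3*π) * ((π - θ) + (π - φ))) ^ (2*β+1) with hBdef
  have hA0 : 0 ≤ 1/(3*π) * (θ + φ) := mul_nonneg (by positivity) (by linarith)
  have hB0 : 0 ≤ 1/(3*π) * ((π - θ) + (π - φ)) := mul_nonneg (by positivity) (by linarith)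
  have hA : 0 ≤ A := Real.rpow_nonneg hA0 _
  have hB : 0 ≤ B := Real.rpow_nonneg hB0 _
  rw [muJacobi_Ioo]
  have hsub : Set.Ioo ((θ + φ)/2 - r/6) ((θ + φ)/2 + r/6) ⊆
      Set.Ioo (θ - r) (θ + r) ∩ Set.Ioo 0 π := by
    rintro t ⟨h1, h2⟩
    exact ⟨⟨by linarith, by linarith⟩, by linarith, by linarith⟩
  calc _ = ∫⁻ _ in Set.Ioo ((θ + φ)/2 - r/6) ((θ + φ)/2 + r/6), ENNReal.ofReal (A * B) := by
        rw [setLIntegral_const, Real.volume_Ioo, ← ENNReal.ofReal_mul (mul_nonneg hA hB),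
          hAdef, hBdef, Real.mul_rpow (by positivity) (by linarith),
          Real.mul_rpow (by positivity) (by linarith)]
        congr 1; ring
    _ ≤ ∫⁻ t in Set.Ioo ((θ + φ)/2 - r/6) ((θ + φ)/2 + r/6),
          ENNReal.ofReal ((Real.sin (t/2)) ^ (2*α+1) * (Real.cos (t/2)) ^ (2*β+1)) := by
        refine setLIntegral_mono' measurableSet_Ioo ?_
        intro t ht'
        have ht := (hsub ht').2
        obtain ⟨h1, h2⟩ := ht'
        obtain ⟨a, b, c, d⟩ := half_angle_bounds ht
        have hs : 0 ≤ Real.sin (t/2) := (div_nonneg ht.1.le hpi.le).trans a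
        have e1 : 1/(3*π) * (θ + φ) ≤ t / π := by
          rw [show 1/(3*π) * (θ + φ) = ((θ + φ)/3) / π by field_simp]
          exact div_le_div_of_nonneg_right (by linarith) hpi.le
        have e2 : 1/(3*π) * ((π - θ) + (π - φ)) ≤ (π - t) / π := by
          rw [show 1/(3*π) * ((π - θ) + (π - φ)) = (((π - θ) + (π - φ))/3) / π by field_simp]
          exact div_le_div_of_nonneg_right (by linarith) hpi.le
        apply ENNReal.ofReal_le_ofReal
        refine mul_le_mul ?_ ?_ hB (Real.rpow_nonneg hs _)
        · exact Real.rpow_le_rpow hA0 (e1.trans a) (by linarith)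
        · exact Real.rpow_le_rpow hB0 (e2.trans c) (by linarith)
    _ ≤ _ := lintegral_mono_set hsub

theorem stmt_9 (α β : ℝ) (hα : α > -1/2) (hβ : β > -1/2) :
    ∃ c₁ c₂ : ℝ, 0 < c₁ ∧ c₁ ≤ c₂ ∧
      ∀ θ ∈ Set.Ioo 0 π, ∀ φ ∈ Set.Ioo 0 π,
        ENNReal.ofReal (c₁ * |θ - φ| * (θ + φ) ^ (2*α+1) * ((π - θ) + (π - φ)) ^ (2*β+1))
            ≤ muJacobi α β (Set.Ioo (θ - |θ - φ|) (θ + |θ - φ|)) ∧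
        muJacobi α β (Set.Ioo (θ - |θ - φ|) (θ + |θ - φ|))
            ≤ ENNReal.ofReal (c₂ * |θ - φ| * (θ + φ) ^ (2*α+1) * ((π - θ) + (π - φ)) ^ (2*β+1)) := by
  have hpi := Real.pi_pos
  refine ⟨1/3 * (1/(3*π)) ^ (2*α+1) * (1/(3*π)) ^ (2*β+1), 2, by positivity, ?_,
    fun θ hθ φ hφ => ⟨le_muJacobi hα hβ hθ hφ, muJacobi_le hα hβ hθ hφ⟩⟩
  have h1 : 1/(3*π) ≤ 1 := by
    rw [div_le_one (by positivity)]; linarith [Real.pi_gt_three]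
  have ha : (1/(3*π)) ^ (2*α+1) ≤ 1 := Real.rpow_le_one (by positivity) h1 (by linarith)
  have hb : (1/(3*π)) ^ (2*β+1) ≤ 1 := Real.rpow_le_one (by positivity) h1 (by linarith)
  have hab := mul_le_one₀ ha (by positivity) hb
  linarith
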